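/- Let r,q ≥ 1 with rq > 1. For every tag L ∈ {A,B} and indices 0 ≤ j ≤ r, 0 ≤ k ≤ q with (L,j,k) ≠ (A,0,0), the Morse number of the vertex labeled L^j_k (i.e., the Morse number i at the meander position σ_{rq}(a), where a is the axis position of the label) equals j+k−1 if L = A, and equals j+k if L = B. In particular, B^r_q is the unique vertex of maximal Morse number r+q. -/

import Mathlib

/-- Morse numbers `i_j` of a permutation `σ` of `{1,…,N}` (extended to `ℕ`),
via the recursion `i_1 = 0`,
`i_{j+1} = i_j + (-1)^(j+1) * sign (σ⁻¹(j+1) - σ⁻¹(j))`. -/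
def morse (σ : Equiv.Perm ℕ) : ℕ → ℤ
  | 0 => 0
  | 1 => 0
  | (j+2) => morse σ (j+1) +
      (-1)^(j+2) * Int.sign ((σ.symm (j+2) : ℤ) - (σ.symm (j+1) : ℤ))

/-- Zero numbers `z_{j k}`, recursion in the first index `j`, second index `k` fixed:
`z_{1k} = 0`, `z_{kk} = i_k`, `z_{k+1,k} = min (i_k, i_{k+1})`, and otherwise
`z_{j+1,k} = z_{jk} + ((-1)^(j+1)/2) * (sign (σ⁻¹(j+1) - σ⁻¹(k)) - sign (σ⁻¹(j) - σ⁻¹(k)))`. -/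
def zrec (σ : Equiv.Perm ℕ) (k : ℕ) : ℕ → ℤ
  | 0 => 0
  | 1 => 0
  | (j+2) =>
      if j+2 = k then morse σ k
      else if j+1 = k then min (morse σ k) (morse σ (k+1))
      else zrec σ k (j+1) +
        ((-1)^(j+2) * (Int.sign ((σ.symm (j+2) : ℤ) - (σ.symm k : ℤ))
          - Int.sign ((σ.symm (j+1) : ℤ) - (σ.symm k : ℤ)))) / 2

/-- The zero number `z_{m n}`. -/
def zfun (σ : Equiv.Perm ℕ) (m n : ℕ) : ℤ := zrec σ n m

/-- The connection digraph of a dissipative Morse permutation `σ` of `{1,…,N}`: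
an edge `m ⤳ n` iff `i_m = i_n + 1` and no `w` strictly between `m` and `n`
blocks, i.e. satisfies `z_{mw} = z_{wn} = z_{mn}`. -/
def hasEdge (N : ℕ) (σ : Equiv.Perm ℕ) (m n : ℕ) : Prop :=
  1 ≤ m ∧ m ≤ N ∧ 1 ≤ n ∧ n ≤ N ∧
  morse σ m = morse σ n + 1 ∧
  ¬ ∃ w : ℕ, min m n < w ∧ w < max m n ∧
      zfun σ m w = zfun σ w n ∧ zfun σ w n = zfun σ m n

/-- A dissipative permutation of `{1,…,N}`. -/
def Dissipative (N : ℕ) (σ : Equiv.Perm ℕ) : Prop :=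
  Set.BijOn σ (Set.Icc 1 N) (Set.Icc 1 N) ∧ σ 1 = 1 ∧ σ N = N

/-- The Morse property: all Morse numbers are nonnegative. -/
def MorseProp (N : ℕ) (σ : Equiv.Perm ℕ) : Prop :=
  ∀ j, 1 ≤ j → j ≤ N → 0 ≤ morse σ j

/-- Morse counts `μ(i) = #{j ∈ {1,…,N} : i_j = i}`. -/
def morseCount (N : ℕ) (σ : Equiv.Perm ℕ) (i : ℤ) : ℕ :=
  ((Finset.Icc 1 N).filter (fun j => morse σ j = i)).card

/-- The primitive 3-nose permutation `σ_{rq}` of `{1,…,N}`, `N = 2(r+1)(q+1)-1`,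
characterized by its defining relations, extended to a permutation of `ℕ`
fixing everything outside `{1,…,N}`. -/
def SigmaRQ (r q : ℕ) (σ : Equiv.Perm ℕ) : Prop :=
  (∀ a, a ∉ Set.Icc 1 (2*(r+1)*(q+1) - 1) → σ a = a) ∧
  (∀ j k, j ≤ r → k ≤ q →
    σ (2*((q+1)*j+k)+1) = 2*(j+(r+1)*k)+1) ∧
  (∀ j k, j ≤ r → k ≤ q → ¬(j = 0 ∧ k = 0) →
    σ (2*((q+1)*(r-j)+(q-k)+1)) = 2*(j+(r+1)*k))

/-- Tags `A`, `B` of equilibrium labels `A^j_k`, `B^j_k`. -/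
inductive Tag | A | B
deriving DecidableEq

/-- The axis position (`h_1`-position) of the label `L^j_k` for parameters `(r,q)`. -/
def axisPos (r q : ℕ) : Tag → ℕ → ℕ → ℕ
  | Tag.A, j, k => if Odd j then (q+1)*(j-1)+k+1 else (q+1)*(2*r+1-j)+(q-k)+1
  | Tag.B, j, k => if Odd j then (q+1)*j+(q-k)+1 else (q+1)*(2*r-j)+k+1

/-- The meander position (`h_0`-position) of the label `L^j_k` for parameters `(r,q)`. -/
def meanderPos (r q : ℕ) : Tag → ℕ → ℕ → ℕ
  | Tag.A, j, k => if Odd k then (r+1)*(2*q+1-k)+(2*r+1-j) else (r+1)*k+j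
  | Tag.B, j, k => if Odd k then (r+1)*(2*q+1-k)+j else (r+1)*(k+1)+(r-j)

/-- The suspension `σ̃` of a dissipative permutation `σ` of `{1,…,N}`:
`σ̃(1) = 1`, `σ̃(N+2) = N+2`, and `σ̃(a+1) = N+2 - σ(a)` for `1 ≤ a ≤ N`. -/
def IsSuspension (N : ℕ) (σ σt : Equiv.Perm ℕ) : Prop :=
  σt 1 = 1 ∧ σt (N+2) = N+2 ∧ ∀ a, 1 ≤ a → a ≤ N → σt (a+1) = N+2 - σ a

/-- The label `A^0_0` is the distinguished (formal) vertex `⋆`. -/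
def IsStar (L : Tag) (j k : ℕ) : Prop := L = Tag.A ∧ j = 0 ∧ k = 0

/-- Tag swap `A ↔ B`, used by the reversor. -/
def tagSwap : Tag → Tag
  | Tag.A => Tag.B
  | Tag.B => Tag.A

/-! The involution `(x, y) ↦ (2r + 1 - x, 2q + 1 - y)` acts on the grid
`{0, …, 2r + 1} × {0, …, 2q + 1}`. Labels are its orbits: `A^j_k` is the orbit of `(j, k)` and
`B^j_k` is the orbit of `(2r + 1 - j, k)`. Every orbit has exactly one representative `(x, 2b)` with
even second coordinate, and the meander position of the label is then `2(r + 1)b + x`: the meander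
traverses the rows `y = 0, 2, 4, …` one after the other. In these coordinates the increment of the
Morse number from `x` to `x + 1` is the sign of `2(r + 1)(q + 1) - 1 - 2((q + 1)x + 2b)`, whatever
the parity of `x`, and from the end of row `2b` to the start of the next it is the sign of
`2q - 4b - 1`. The numbers `j + k - 1` at `A^j_k` and `j + k` at `B^j_k` have the same
increments, and the same value `0` at position `1`. -/

/-- The axis position of the vertex represented by `(x, 2b)`, in the form in which the defining
relations of `σ_{rq}` give it: one of them covers even `x`, the other odd `x`. -/
def gridAxis (r q x b : ℕ) : ℕ :=
  if Even x then 2 * ((q + 1) * (r - x / 2) + (q - b) + 1) else 2 * ((q + 1) * (x / 2) + b) + 1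

/-- The Morse number of the vertex represented by `(x, 2b)`: `j + k - 1` for the label `A^j_k` and
`j + k` for `B^j_k`, where `j` and `k` are `x` and `2b` folded into `[0, r]` and `[0, q]`. The tag
is `A` if both coordinates or neither of them had to be reflected. -/
def gridMorse (r q x b : ℕ) : ℤ :=
  (min x (2 * r + 1 - x) + min (2 * b) (2 * q + 1 - 2 * b) : ℕ)
    - if x ≤ r ↔ 2 * b ≤ q then 1 else 0

/-- The coordinate `x` of the representative `(x, 2b)` of a label. -/
def labelCol (r : ℕ) : Tag → ℕ → ℕ → ℕ
  | Tag.A, j, k => if Odd k then 2 * r + 1 - j else j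
  | Tag.B, j, k => if Odd k then j else 2 * r + 1 - j

/-- The coordinate `b` of the representative `(x, 2b)` of a label with lower index `k`. -/
def labelRow (q k : ℕ) : ℕ := if Odd k then q - k / 2 else k / 2

section

variable {r q x b j k : ℕ} {L : Tag} {σ : Equiv.Perm ℕ}

theorem morse_succ (σ : Equiv.Perm ℕ) {m : ℕ} (hm : 0 < m) :
    morse σ (m + 1) = morse σ m
      + ((-1) ^ (m + 1) * ((σ.symm (m + 1) : ℤ) - σ.symm m)).sign := by
  obtain ⟨n, rfl⟩ := Nat.exists_eq_add_one.2 hm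
  rw [morse, Int.sign_mul]
  congr 2
  rcases neg_one_pow_eq_or ℤ (n + 2) with h | h <;> simp [h]

theorem gridAxis_two_mul (r q a b : ℕ) :
    gridAxis r q (2 * a) b = 2 * ((q + 1) * (r - a) + (q - b) + 1) := by
  simp [gridAxis]

theorem gridAxis_two_mul_add_one (r q a b : ℕ) :
    gridAxis r q (2 * a + 1) b = 2 * ((q + 1) * a + b) + 1 := by
  simp [gridAxis, parity_simps, Nat.mul_add_div]

theorem gridAxis_succ_sub (hx : x ≤ 2 * r) (hb : b ≤ q) :
    (-1) ^ (x + 1) * ((gridAxis r q (x + 1) b : ℤ) - gridAxis r q x b) =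
      2 * (r + 1) * (q + 1) - 1 - 2 * ((q + 1) * x + 2 * b) := by
  obtain ⟨a, rfl | rfl⟩ := x.even_or_odd'
  · have ha : a ≤ r := by omega
    rw [gridAxis_two_mul, gridAxis_two_mul_add_one, (odd_two_mul_add_one a).neg_one_pow]
    push_cast [ha, hb]
    ring
  · have ha : a + 1 ≤ r := by omega
    rw [show 2 * a + 1 + 1 = 2 * (a + 1) by ring, gridAxis_two_mul, gridAxis_two_mul_add_one,
      (even_two_mul (a + 1)).neg_one_pow]
    push_cast [ha, hb]
    ring

theorem gridAxis_zero_succ_sub (hb : b + 1 ≤ q) :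
    (gridAxis r q 0 (b + 1) : ℤ) - gridAxis r q (2 * r + 1) b = 2 * q - 4 * b - 1 := by
  rw [gridAxis_two_mul r q 0, gridAxis_two_mul_add_one, Nat.sub_zero]
  push_cast [hb]
  ring

theorem gridMorse_succ (hx : x ≤ 2 * r) (hb : b ≤ q) :
    gridMorse r q (x + 1) b = gridMorse r q x b
      + (2 * (r + 1) * (q + 1) - 1 - 2 * ((q + 1) * x + 2 * b) : ℤ).sign := by
  have hcases : (x < r ∨ x = r ∧ 2 * b ≤ q) ∨ (x = r ∧ q < 2 * b ∨ r < x) := by omega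
  rcases hcases with hup | hdown
  · have hpos : (0 : ℤ) < 2 * (r + 1) * (q + 1) - 1 - 2 * ((q + 1) * x + 2 * b) := by
      rcases hup with h | ⟨rfl, h⟩ <;> nlinarith
    rw [Int.sign_eq_one_of_pos hpos]
    grind [gridMorse]
  · have hneg : (2 * (r + 1) * (q + 1) - 1 - 2 * ((q + 1) * x + 2 * b) : ℤ) < 0 := by
      rcases hdown with ⟨rfl, h⟩ | h <;> nlinarith
    rw [Int.sign_eq_neg_one_of_neg hneg]
    grind [gridMorse]

theorem gridMorse_zero_succ (hb : b + 1 ≤ q) :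
    gridMorse r q 0 (b + 1) = gridMorse r q (2 * r + 1) b + (2 * q - 4 * b - 1 : ℤ).sign := by
  rcases lt_or_ge (2 * b) q with h | h
  · rw [Int.sign_eq_one_of_pos (by omega)]
    grind [gridMorse]
  · rw [Int.sign_eq_neg_one_of_neg (by omega)]
    grind [gridMorse]

theorem gridMorse_label (hj : j ≤ r) (hk : k ≤ q) :
    gridMorse r q (labelCol r L j k) (labelRow q k) =
      if L = Tag.A then (j : ℤ) + k - 1 else (j : ℤ) + k := by
  cases L <;> grind [gridMorse, labelCol, labelRow]

theorem eq_label_of_gridMorse_eq_add (hx : x ≤ 2 * r + 1) (hb : b ≤ q)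
    (h : gridMorse r q x b = r + q) :
    x = labelCol r Tag.B r q ∧ b = labelRow q q := by
  grind [gridMorse, labelCol, labelRow]

theorem labelCol_le (hj : j ≤ r) : labelCol r L j k ≤ 2 * r + 1 := by
  cases L <;> grind [labelCol]

theorem labelRow_le (hk : k ≤ q) : labelRow q k ≤ q := by
  grind [labelRow]

theorem label_ne_zero (hj : j ≤ r) (hk : k ≤ q) (hne : ¬(L = Tag.A ∧ j = 0 ∧ k = 0)) :
    ¬(labelCol r L j k = 0 ∧ labelRow q k = 0) := by
  cases L <;> grind [labelCol, labelRow]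

theorem axisPos_eq_gridAxis (hj : j ≤ r) (hk : k ≤ q) :
    axisPos r q L j k = gridAxis r q (labelCol r L j k) (labelRow q k) := by
  obtain ⟨a, ha⟩ := j.even_or_odd'
  obtain ⟨c, hc⟩ := k.even_or_odd'
  have har : a ≤ r := by omega
  have hcq : c ≤ q := by omega
  have reflect_even : 2 * r + 1 - 2 * a = 2 * (r - a) + 1 := by omega
  have reflect_odd : 2 * r + 1 - (2 * a + 1) = 2 * (r - a) := by omega
  have half_odd : (2 * c + 1) / 2 = c := by omega
  have half_even : 2 * c / 2 = c := by omega
  rcases ha with rfl | rfl <;> rcases hc with rfl | rfl <;> cases L <;>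
    simp only [axisPos, labelCol, labelRow, odd_two_mul_add_one, Nat.not_odd_iff_even.2,
      even_two_mul, half_odd, half_even, if_true, if_false, reflect_even, reflect_odd,
      gridAxis_two_mul, gridAxis_two_mul_add_one, Nat.sub_sub_self har, Nat.sub_sub_self hcq,
      add_tsub_cancel_right, ← Nat.mul_sub] <;>
    zify [hk, har, hcq] <;> ring

theorem exists_grid_eq {m : ℕ} (hm : m < 2 * (r + 1) * (q + 1)) :
    ∃ x b, x ≤ 2 * r + 1 ∧ b ≤ q ∧ m = 2 * (r + 1) * b + x :=
  ⟨m % (2 * (r + 1)), m / (2 * (r + 1)), Nat.lt_succ_iff.1 (Nat.mod_lt _ (by omega)),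
    Nat.lt_succ_iff.1 (Nat.div_lt_of_lt_mul hm), (Nat.div_add_mod _ _).symm⟩

namespace SigmaRQ

theorem apply_gridAxis (hσ : SigmaRQ r q σ) (hx : x ≤ 2 * r + 1) (hb : b ≤ q)
    (hne : ¬(x = 0 ∧ b = 0)) : σ (gridAxis r q x b) = 2 * (r + 1) * b + x := by
  obtain ⟨a, rfl | rfl⟩ := x.even_or_odd'
  · rw [gridAxis_two_mul, hσ.2.2 a b (by omega) hb (by omega)]
    ring
  · rw [gridAxis_two_mul_add_one, hσ.2.1 a b (by omega) hb]
    ring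

theorem symm_apply_grid (hσ : SigmaRQ r q σ) (hx : x ≤ 2 * r + 1) (hb : b ≤ q)
    (hne : ¬(x = 0 ∧ b = 0)) : σ.symm (2 * (r + 1) * b + x) = gridAxis r q x b :=
  σ.symm_apply_eq.2 (hσ.apply_gridAxis hx hb hne).symm

theorem apply_axisPos (hσ : SigmaRQ r q σ) (hj : j ≤ r) (hk : k ≤ q)
    (hne : ¬(L = Tag.A ∧ j = 0 ∧ k = 0)) :
    σ (axisPos r q L j k) = 2 * (r + 1) * labelRow q k + labelCol r L j k := by
  rw [axisPos_eq_gridAxis hj hk]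
  exact hσ.apply_gridAxis (labelCol_le hj) (labelRow_le hk) (label_ne_zero hj hk hne)

theorem morse_col_succ (hσ : SigmaRQ r q σ) (hx : x ≤ 2 * r) (hb : b ≤ q)
    (hne : ¬(x = 0 ∧ b = 0)) :
    morse σ (2 * (r + 1) * b + (x + 1)) = morse σ (2 * (r + 1) * b + x)
      + (2 * (r + 1) * (q + 1) - 1 - 2 * ((q + 1) * x + 2 * b) : ℤ).sign := by
  have hpos : 0 < 2 * (r + 1) * b + x := by
    by_contra! h
    simp_all
  have hparity : (-1 : ℤ) ^ (2 * (r + 1) * b + (x + 1)) = (-1) ^ (x + 1) := by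
    rw [pow_add, mul_assoc, (even_two_mul _).neg_one_pow, one_mul]
  rw [← gridAxis_succ_sub hx hb, ← hσ.symm_apply_grid (by omega) hb hne,
    ← hσ.symm_apply_grid (by omega) hb (by omega), ← hparity]
  exact morse_succ σ hpos

theorem morse_row_succ (hσ : SigmaRQ r q σ) (hb : b + 1 ≤ q) :
    morse σ (2 * (r + 1) * (b + 1)) = morse σ (2 * (r + 1) * b + (2 * r + 1))
      + (2 * q - 4 * b - 1 : ℤ).sign := by
  have hnext : 2 * (r + 1) * (b + 1) = 2 * (r + 1) * b + (2 * r + 1) + 1 := by ring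
  have hparity : (-1 : ℤ) ^ (2 * (r + 1) * (b + 1)) = 1 := by
    rw [mul_assoc, (even_two_mul _).neg_one_pow]
  rw [← gridAxis_zero_succ_sub (r := r) hb, ← hσ.symm_apply_grid (by omega) hb (by omega),
    ← hσ.symm_apply_grid le_rfl (by omega) (by omega), add_zero, ← one_mul (_ - _), ← hparity,
    hnext]
  exact morse_succ σ (by omega)

theorem morse_grid (hσ : SigmaRQ r q σ) (hx : x ≤ 2 * r + 1) (hb : b ≤ q)
    (hne : ¬(x = 0 ∧ b = 0)) : morse σ (2 * (r + 1) * b + x) = gridMorse r q x b := by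
  induction b generalizing x with
  | zero =>
    induction x with
    | zero => simp at hne
    | succ x ihx =>
      rcases x.eq_zero_or_pos with rfl | h
      · grind [gridMorse, morse]
      · rw [hσ.morse_col_succ (by omega) hb (by omega), gridMorse_succ (by omega) hb,
          ihx (by omega) (by omega)]
  | succ b ihb =>
    induction x with
    | zero =>
      rw [add_zero, hσ.morse_row_succ hb, gridMorse_zero_succ hb,
        ihb le_rfl (by omega) (by omega)]
    | succ x ihx =>
      rw [hσ.morse_col_succ (by omega) hb (by omega), gridMorse_succ (by omega) hb,
        ihx (by omega) (by omega)]

end SigmaRQ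

end

/-- Morse numbers of the labeled vertices: `i(A^j_k) = j+k-1`,
`i(B^j_k) = j+k`; and `B^r_q` is the unique vertex of maximal Morse number `r+q`. -/
theorem stmt_8 (r q : ℕ) (hr : 1 ≤ r) (hq : 1 ≤ q) (hrq : 1 < r*q)
    (σ : Equiv.Perm ℕ) (hσ : SigmaRQ r q σ) :
    (∀ (L : Tag) (j k : ℕ), j ≤ r → k ≤ q → ¬(L = Tag.A ∧ j = 0 ∧ k = 0) →
      morse σ (σ (axisPos r q L j k))
        = (if L = Tag.A then (j : ℤ) + (k : ℤ) - 1 else (j : ℤ) + (k : ℤ))) ∧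
    (∀ m, 1 ≤ m → m ≤ 2*(r+1)*(q+1)-1 →
      (morse σ m = (r : ℤ) + (q : ℤ) ↔ m = σ (axisPos r q Tag.B r q))) := by
  have hlabel (L : Tag) (j k : ℕ) (hj : j ≤ r) (hk : k ≤ q)
      (hne : ¬(L = Tag.A ∧ j = 0 ∧ k = 0)) :
      morse σ (σ (axisPos r q L j k)) = if L = Tag.A then (j : ℤ) + k - 1 else (j : ℤ) + k := by
    rw [hσ.apply_axisPos hj hk hne, hσ.morse_grid (labelCol_le hj) (labelRow_le hk)
      (label_ne_zero hj hk hne), gridMorse_label hj hk]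
  refine ⟨hlabel, fun m hm₁ hm₂ => ⟨fun hmax => ?_, ?_⟩⟩
  · obtain ⟨x, b, hx, hb, rfl⟩ := exists_grid_eq (r := r) (q := q) (m := m) (by omega)
    rw [hσ.morse_grid hx hb (by rintro ⟨rfl, rfl⟩; simp at hm₁)] at hmax
    obtain ⟨rfl, rfl⟩ := eq_label_of_gridMorse_eq_add hx hb hmax
    rw [hσ.apply_axisPos le_rfl le_rfl (by simp)]
  · rintro rfl
    simpa using hlabel Tag.B r q le_rfl le_rfl (by simp)
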